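/- Let N ≥ 1 and Λ > 0, and let (u, v) be a classical solution of the system (P_Λ) (no sign or boundedness assumption on u, v). Then |u(x)| ≤ 1 and |v(x)| ≤ 1 for every x ∈ ℝ^N. -/

import Mathlib

/-!
Each of `u`, `v` solves `Δf = f³ - f + q f` with `q ≥ 0`, so `g = f - 1` satisfies `Δg ≥ g³` where
`g > 0`, and likewise for `-f - 1`. Entire functions with `Δg ≥ c g ^ p` on `{g > 0}`, where
`c > 0` and `p > 1`, are nonpositive (Keller–Osserman): put `ψ = R² - ‖· - x₀‖²` and
`k = 2 / (p - 1)`. If `g x₀ > 0`, then `ψ ^ k * g` has a positive interior maximum over the ball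
of radius `R` about `x₀`, and there the first and second order conditions for
`k log ψ + log g` give `ψ² Δg ≤ C R² g`, hence `c (ψ ^ k * g) ^ (p - 1) ≤ C R²`. Comparing with the
value at `x₀` yields `c (g x₀) ^ (p - 1) ≤ C / R²`, which fails for large `R`.
-/

open scoped RealInnerProductSpace
open Filter

noncomputable section

/-- The Laplacian of `f : ℝ^N → ℝ`, as the sum of the pure second partial
derivatives in the coordinate directions. -/
def lap (N : ℕ) (f : EuclideanSpace ℝ (Fin N) → ℝ) (x : EuclideanSpace ℝ (Fin N)) : ℝ :=
  ∑ i : Fin N,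
    fderiv ℝ (fun y => fderiv ℝ f y (EuclideanSpace.single i 1)) x (EuclideanSpace.single i 1)

/-- `(u, v)` is a classical solution of the system `(P_Λ)` on `ℝ^N`:
`u, v` are `C²` and `-Δu = u - u³ - Λ u v²`, `-Δv = v - v³ - Λ u² v` pointwise. -/
def IsSolution (N : ℕ) (Λ : ℝ) (u v : EuclideanSpace ℝ (Fin N) → ℝ) : Prop :=
  ContDiff ℝ 2 u ∧ ContDiff ℝ 2 v ∧
  (∀ x, -lap N u x = u x - (u x) ^ 3 - Λ * u x * (v x) ^ 2) ∧
  (∀ x, -lap N v x = v x - (v x) ^ 3 - Λ * (u x) ^ 2 * v x)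

/-- Condition `(h∞)`: `u → 1`, `v → 0` as `x_N → +∞` and `u → 0`, `v → 1` as
`x_N → -∞`, uniformly with respect to `x' ∈ ℝ^{N-1}` (the dimension is `N + 1`). -/
def Hinf (N : ℕ) (u v : EuclideanSpace ℝ (Fin (N + 1)) → ℝ) : Prop :=
  (∀ ε : ℝ, 0 < ε → ∃ M : ℝ, ∀ x : EuclideanSpace ℝ (Fin (N + 1)),
    M ≤ x (Fin.last N) → |u x - 1| < ε ∧ |v x| < ε) ∧
  (∀ ε : ℝ, 0 < ε → ∃ M : ℝ, ∀ x : EuclideanSpace ℝ (Fin (N + 1)),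
    x (Fin.last N) ≤ M → |u x| < ε ∧ |v x - 1| < ε)

open Laplacian InnerProductSpace Metric
open scoped Topology

section SecondOrder

variable {E : Type*} [NormedAddCommGroup E] [NormedSpace ℝ E] {f : E → ℝ} {x : E}

theorem deriv_deriv_nonpos_of_isLocalMax {f : ℝ → ℝ} {a : ℝ} (hf : ContinuousAt f a)
    (hmax : IsLocalMax f a) : deriv (deriv f) a ≤ 0 := by
  by_contra! hpos
  have hmin : IsLocalMin f a := isLocalMin_of_deriv_deriv_pos hpos hmax.deriv_eq_zero hf
  have hconst : f =ᶠ[𝓝 a] fun _ => f a := by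
    filter_upwards [hmin, hmax] with t h₁ h₂ using le_antisymm h₂ h₁
  simp [hconst.deriv.deriv_eq] at hpos

theorem hasFDerivAt_fderiv (hf : ContDiffAt ℝ 2 f x) :
    HasFDerivAt (fderiv ℝ f) (fderiv ℝ (fderiv ℝ f) x) x :=
  ((hf.fderiv_right (m := 1) (by norm_num)).differentiableAt one_ne_zero).hasFDerivAt

theorem fderiv_fderiv_nonpos_of_isLocalMax (hf : ContDiffAt ℝ 2 f x) (hmax : IsLocalMax f x)
    (e : E) : fderiv ℝ (fderiv ℝ f) x e e ≤ 0 := by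
  have hline (t : ℝ) : HasDerivAt (fun s : ℝ => x + s • e) e t := by
    simpa using ((hasDerivAt_id t).smul_const e).const_add x
  have hlim : Tendsto (fun s : ℝ => x + s • e) (𝓝 0) (𝓝 x) := by
    simpa using (hline 0).continuousAt.tendsto
  have hfst : deriv (fun s : ℝ => f (x + s • e)) =ᶠ[𝓝 0] fun s => fderiv ℝ f (x + s • e) e := by
    filter_upwards [hlim.eventually (hf.eventually (by simp))] with t ht
    exact ((ht.differentiableAt two_ne_zero).hasFDerivAt.comp_hasDerivAt t (hline t)).deriv
  have hsnd : HasDerivAt (fun s : ℝ => fderiv ℝ f (x + s • e) e)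
      (fderiv ℝ (fderiv ℝ f) x e e) 0 := by
    have hfderiv : HasDerivAt (fun s : ℝ => fderiv ℝ f (x + s • e))
        (fderiv ℝ (fderiv ℝ f) x e) 0 := (hasFDerivAt_fderiv hf).hasLineDerivAt e
    simpa using hfderiv.clm_apply (hasDerivAt_const 0 e)
  have hmax₀ : IsLocalMax (fun s : ℝ => f (x + s • e)) 0 := by
    simpa [IsLocalMax, IsMaxFilter] using hlim.eventually hmax
  have hcont : ContinuousAt (fun s : ℝ => f (x + s • e)) 0 :=
    ContinuousAt.comp (by simpa using hf.continuousAt) (hline 0).continuousAt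
  simpa only [hfst.deriv_eq, hsnd.deriv] using deriv_deriv_nonpos_of_isLocalMax hcont hmax₀

theorem fderiv_fderiv_comp_apply {h : ℝ → ℝ} (hh : ContDiffAt ℝ 2 h (f x))
    (hf : ContDiffAt ℝ 2 f x) (e : E) :
    fderiv ℝ (fderiv ℝ (h ∘ f)) x e e =
      deriv h (f x) * fderiv ℝ (fderiv ℝ f) x e e +
        deriv (deriv h) (f x) * fderiv ℝ f x e ^ 2 := by
  have hfst : fderiv ℝ (h ∘ f) =ᶠ[𝓝 x] (deriv h ∘ f) • fderiv ℝ f := by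
    filter_upwards [hf.eventually (by simp),
      hf.continuousAt.eventually (hh.eventually (by simp))] with y hfy hhy
    exact ((hhy.differentiableAt two_ne_zero).hasDerivAt.comp_hasFDerivAt y
      (hfy.differentiableAt two_ne_zero).hasFDerivAt).fderiv
  have hh' : HasDerivAt (deriv h) (deriv (deriv h) (f x)) (f x) :=
    ((hh.derivWithin (m := 1) (by norm_num)).differentiableAt one_ne_zero).hasDerivAt
  have hsnd := (hh'.comp_hasFDerivAt x (hf.differentiableAt two_ne_zero).hasFDerivAt).smul
    (hasFDerivAt_fderiv hf)
  rw [hfst.fderiv_eq, hsnd.fderiv]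
  simp only [Function.comp_apply, add_apply, smul_apply, ContinuousLinearMap.smulRight_apply,
    smul_eq_mul]
  ring

end SecondOrder

theorem isLocalMax_log_of_isLocalMax_rpow_mul {X : Type*} [TopologicalSpace X] {φ g : X → ℝ} {x : X}
    {k : ℝ} (hφ : ContinuousAt φ x) (hg : ContinuousAt g x) (hφx : 0 < φ x) (hgx : 0 < g x)
    (hmax : IsLocalMax (fun y => φ y ^ k * g y) x) :
    IsLocalMax (k • (Real.log ∘ φ) + Real.log ∘ g) x := by
  have hlog {y : X} (hφy : 0 < φ y) (hgy : 0 < g y) :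
      (k • (Real.log ∘ φ) + Real.log ∘ g) y = Real.log (φ y ^ k * g y) := by
    rw [Real.log_mul (Real.rpow_pos_of_pos hφy k).ne' hgy.ne', Real.log_rpow hφy]
    rfl
  filter_upwards [hmax, hφ.eventually_const_lt hφx, hg.eventually_const_lt hgx] with y hy hφy hgy
  rw [hlog hφy hgy, hlog hφx hgx]
  exact Real.log_le_log (by positivity) hy

theorem fderiv_const_sub_norm_sub_sq {E : Type*} [NormedAddCommGroup E] [InnerProductSpace ℝ E]
    (a : ℝ) (x₀ : E) :
    fderiv ℝ (fun y => a - ‖y - x₀‖ ^ 2) = fun y => -((2 : ℝ) • innerSL ℝ (y - x₀)) := by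
  ext1 y
  have hderiv : HasFDerivAt (fun z => a - ‖z - x₀‖ ^ 2) (-(2 • innerSL ℝ (y - x₀))) y :=
    ((hasFDerivAt_id y).sub_const x₀).norm_sq.const_sub a
  rw [hderiv.fderiv, two_nsmul, two_smul]

section Laplacian

variable {E : Type*} [NormedAddCommGroup E] [InnerProductSpace ℝ E] [FiniteDimensional ℝ E]
  {f g φ : E → ℝ} {x : E}

theorem laplacian_eq_sum_fderiv_fderiv {ι : Type*} [Fintype ι] (b : OrthonormalBasis ι ℝ E)
    (f : E → ℝ) (x : E) : Δ f x = ∑ i, fderiv ℝ (fderiv ℝ f) x (b i) (b i) := by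
  simp [laplacian_eq_iteratedFDeriv_orthonormalBasis f b, iteratedFDeriv_two_apply]

theorem laplacian_nonpos_of_isLocalMax (hf : ContDiffAt ℝ 2 f x) (hmax : IsLocalMax f x) :
    Δ f x ≤ 0 := by
  rw [laplacian_eq_sum_fderiv_fderiv (stdOrthonormalBasis ℝ E)]
  exact Finset.sum_nonpos fun i _ => fderiv_fderiv_nonpos_of_isLocalMax hf hmax _

theorem laplacian_comp {h : ℝ → ℝ} (hh : ContDiffAt ℝ 2 h (f x)) (hf : ContDiffAt ℝ 2 f x) :
    Δ (h ∘ f) x = deriv h (f x) * Δ f x + deriv (deriv h) (f x) * ‖fderiv ℝ f x‖ ^ 2 := by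
  let b := stdOrthonormalBasis ℝ E
  simp only [laplacian_eq_sum_fderiv_fderiv b, fderiv_fderiv_comp_apply hh hf,
    Finset.sum_add_distrib, ← Finset.mul_sum, b.norm_dual]

theorem laplacian_log (hf : ContDiffAt ℝ 2 f x) (hx : f x ≠ 0) :
    Δ (Real.log ∘ f) x = Δ f x / f x - ‖fderiv ℝ f x‖ ^ 2 / f x ^ 2 := by
  rw [laplacian_comp (Real.contDiffAt_log.2 hx) hf]
  simp only [Real.deriv_log', deriv_inv]
  ring

theorem laplacian_const_sub_norm_sub_sq (a : ℝ) (x₀ x : E) :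
    Δ (fun y => a - ‖y - x₀‖ ^ 2) x = -(2 * Module.finrank ℝ E) := by
  have hfderiv : fderiv ℝ (fun y => -((2 : ℝ) • innerSL ℝ (y - x₀))) x =
      -((2 : ℝ) • innerSL ℝ (E := E)) :=
    (((innerSL ℝ).hasFDerivAt.comp x
      ((hasFDerivAt_id x).sub_const x₀)).const_smul (2 : ℝ)).neg.fderiv
  have hsnd (e : E) : fderiv ℝ (fun y => -((2 : ℝ) • innerSL ℝ (y - x₀))) x e e =
      -(2 * ⟪e, e⟫) := by
    rw [hfderiv]
    rfl
  simp only [laplacian_eq_sum_fderiv_fderiv (stdOrthonormalBasis ℝ E),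
    fderiv_const_sub_norm_sub_sq, hsnd]
  simp [mul_comm]

theorem laplacian_div_le_of_isLocalMax_rpow_mul {k : ℝ} (hφ : ContDiffAt ℝ 2 φ x)
    (hg : ContDiffAt ℝ 2 g x) (hφx : 0 < φ x) (hgx : 0 < g x)
    (hmax : IsLocalMax (fun y => φ y ^ k * g y) x) :
    Δ g x / g x ≤ (k + k ^ 2) * (‖fderiv ℝ φ x‖ ^ 2 / φ x ^ 2) - k * (Δ φ x / φ x) := by
  have hlogφ : ContDiffAt ℝ 2 (Real.log ∘ φ) x := hφ.log hφx.ne'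
  have hlogg : ContDiffAt ℝ 2 (Real.log ∘ g) x := hg.log hgx.ne'
  have hkφ : ContDiffAt ℝ 2 (k • (Real.log ∘ φ)) x := hlogφ.const_smul k
  have hlogmax : IsLocalMax (k • (Real.log ∘ φ) + Real.log ∘ g) x :=
    isLocalMax_log_of_isLocalMax_rpow_mul hφ.continuousAt hg.continuousAt hφx hgx hmax
  have hfst : (g x)⁻¹ • fderiv ℝ g x = -(k • (φ x)⁻¹ • fderiv ℝ φ x) := by
    have hφ' := ((hφ.differentiableAt two_ne_zero).hasFDerivAt.log hφx.ne').const_smul k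
    have hg' := (hg.differentiableAt two_ne_zero).hasFDerivAt.log hgx.ne'
    exact eq_neg_of_add_eq_zero_right (hlogmax.hasFDerivAt_eq_zero (hφ'.add hg'))
  have hnorm : ‖fderiv ℝ g x‖ ^ 2 / g x ^ 2 = k ^ 2 * (‖fderiv ℝ φ x‖ ^ 2 / φ x ^ 2) := by
    have hsq := congrArg (‖·‖ ^ 2) hfst
    simp only [norm_smul, norm_inv, Real.norm_eq_abs, mul_pow, inv_pow, sq_abs, norm_neg] at hsq
    rw [div_eq_inv_mul, div_eq_inv_mul, hsq]
  have hsnd : Δ (k • (Real.log ∘ φ) + Real.log ∘ g) x ≤ 0 :=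
    laplacian_nonpos_of_isLocalMax (hkφ.add hlogg) hlogmax
  rw [hkφ.laplacian_add hlogg, laplacian_smul k hlogφ, laplacian_log hφ hφx.ne',
    laplacian_log hg hgx.ne', hnorm, smul_eq_mul] at hsnd
  linarith

end Laplacian

section KellerOsserman

theorem exists_isLocalMax_rpow_mul {V : Type*} [NormedAddCommGroup V] [ProperSpace V] {g : V → ℝ}
    {x₀ : V} {k R : ℝ} (hk : 0 < k) (hR : 0 < R) (hg : ContinuousOn g (closedBall x₀ R))
    (hg₀ : 0 < g x₀) :
    ∃ x ∈ ball x₀ R, IsLocalMax (fun y => (R ^ 2 - ‖y - x₀‖ ^ 2) ^ k * g y) x ∧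
      (R ^ 2) ^ k * g x₀ ≤ (R ^ 2 - ‖x - x₀‖ ^ 2) ^ k * g x := by
  have hcont : ContinuousOn (fun y => (R ^ 2 - ‖y - x₀‖ ^ 2) ^ k * g y) (closedBall x₀ R) :=
    (ContinuousOn.rpow_const (by fun_prop) fun _ _ => Or.inr hk.le).mul hg
  have hcenter : x₀ ∈ closedBall x₀ R := mem_closedBall_self hR.le
  have hsphere : ∀ y ∈ closedBall x₀ R \ ball x₀ R,
      (R ^ 2 - ‖y - x₀‖ ^ 2) ^ k * g y < (R ^ 2 - ‖x₀ - x₀‖ ^ 2) ^ k * g x₀ := by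
    intro y hy
    rw [closedBall_sdiff_ball, mem_sphere_iff_norm] at hy
    have hpos : 0 < (R ^ 2) ^ k * g x₀ := by positivity
    simpa [hy, Real.zero_rpow hk.ne'] using hpos
  obtain ⟨x, hx, hmax⟩ :=
    (isCompact_closedBall x₀ R).exists_isMaxOn_mem_subset hcont hcenter hsphere
  refine ⟨x, hx, hmax.isLocalMax (closedBall_mem_nhds_of_mem hx), ?_⟩
  simpa using hmax hcenter

variable {E : Type*} [NormedAddCommGroup E] [InnerProductSpace ℝ E] [FiniteDimensional ℝ E]
  {g : E → ℝ}

theorem sq_mul_laplacian_le_of_isLocalMax {x₀ x : E} {k R : ℝ} (hk : 0 ≤ k) (hx : x ∈ ball x₀ R)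
    (hg : ContDiffAt ℝ 2 g x) (hgx : 0 < g x)
    (hmax : IsLocalMax (fun y => (R ^ 2 - ‖y - x₀‖ ^ 2) ^ k * g y) x) :
    (R ^ 2 - ‖x - x₀‖ ^ 2) ^ 2 * Δ g x ≤
      2 * k * (2 * (k + 1) + Module.finrank ℝ E) * R ^ 2 * g x := by
  set ψ : E → ℝ := fun y => R ^ 2 - ‖y - x₀‖ ^ 2 with hψ
  have hψx : 0 < ψ x := by
    rw [mem_ball_iff_norm] at hx
    exact sub_pos.2 (by gcongr)
  have hψ₂ : ContDiffAt ℝ 2 ψ x :=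
    contDiffAt_const.sub ((contDiffAt_id.sub contDiffAt_const).norm_sq ℝ)
  have hnorm : ‖fderiv ℝ ψ x‖ = 2 * ‖x - x₀‖ := by
    rw [hψ, fderiv_const_sub_norm_sub_sq, norm_neg, norm_smul, innerSL_apply_norm,
      Real.norm_ofNat]
  have hlap := laplacian_div_le_of_isLocalMax_rpow_mul hψ₂ hg hψx hgx hmax
  rw [laplacian_const_sub_norm_sub_sq, hnorm, div_le_iff₀ hgx] at hlap
  calc ψ x ^ 2 * Δ g x
      ≤ ψ x ^ 2 * (((k + k ^ 2) * ((2 * ‖x - x₀‖) ^ 2 / ψ x ^ 2)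
          - k * (-(2 * Module.finrank ℝ E) / ψ x)) * g x) := by gcongr
    _ = 2 * k * (2 * (k + 1) * ‖x - x₀‖ ^ 2 + Module.finrank ℝ E * ψ x) * g x := by
      field_simp
      ring
    _ ≤ 2 * k * (2 * (k + 1) * R ^ 2 + Module.finrank ℝ E * R ^ 2) * g x := by
      gcongr
      · exact (mem_ball_iff_norm.1 hx).le
      · exact sub_le_self _ (sq_nonneg _)
    _ = 2 * k * (2 * (k + 1) + Module.finrank ℝ E) * R ^ 2 * g x := by ring

theorem mul_rpow_le_div_sq_of_rpow_le_laplacian {x₀ : E} {c k p R : ℝ} (hc : 0 < c) (hk : 0 < k)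
    (hkp : k * (p - 1) = 2) (hR : 0 < R) (hcont : ContinuousOn g (closedBall x₀ R))
    (hg : ContDiffOn ℝ 2 g (ball x₀ R)) (hg₀ : 0 < g x₀)
    (hΔ : ∀ x ∈ ball x₀ R, 0 < g x → c * g x ^ p ≤ Δ g x) :
    c * g x₀ ^ (p - 1) ≤ 2 * k * (2 * (k + 1) + Module.finrank ℝ E) / R ^ 2 := by
  set C := 2 * k * (2 * (k + 1) + Module.finrank ℝ E)
  obtain ⟨x, hx, hmax, hle⟩ := exists_isLocalMax_rpow_mul hk hR hcont hg₀
  set ψ := R ^ 2 - ‖x - x₀‖ ^ 2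
  have hψ₀ : 0 < ψ := by
    rw [mem_ball_iff_norm] at hx
    exact sub_pos.2 (by gcongr)
  have hgx : 0 < g x := pos_of_mul_pos_right (lt_of_lt_of_le (by positivity) hle) (by positivity)
  have hp : 0 ≤ p - 1 := by
    by_contra! h
    nlinarith
  have hrpow {s t : ℝ} (hs : 0 < s) (ht : 0 < t) : (s ^ k * t) ^ (p - 1) = s ^ 2 * t ^ (p - 1) := by
    rw [Real.mul_rpow (by positivity) ht.le, ← Real.rpow_mul hs.le, hkp, Real.rpow_two]
  have hcenter : (R ^ 2) ^ 2 * g x₀ ^ (p - 1) ≤ ψ ^ 2 * g x ^ (p - 1) := by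
    rw [← hrpow (by positivity) hg₀, ← hrpow hψ₀ hgx]
    gcongr
  have hbound : c * (ψ ^ 2 * g x ^ (p - 1)) ≤ C * R ^ 2 := by
    refine le_of_mul_le_mul_right ?_ hgx
    calc c * (ψ ^ 2 * g x ^ (p - 1)) * g x = ψ ^ 2 * (c * g x ^ p) := by
          rw [Real.rpow_sub_one hgx.ne']
          field_simp
      _ ≤ ψ ^ 2 * Δ g x := by gcongr; exact hΔ x hx hgx
      _ ≤ C * R ^ 2 * g x :=
          sq_mul_laplacian_le_of_isLocalMax hk.le hx
            (hg.contDiffAt (isOpen_ball.mem_nhds hx)) hgx hmax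
  rw [le_div_iff₀ (by positivity)]
  refine le_of_mul_le_mul_right ?_ (by positivity : 0 < R ^ 2)
  linarith [mul_le_mul_of_nonneg_left hcenter hc.le]

theorem nonpos_of_rpow_le_laplacian {c p : ℝ} (hc : 0 < c) (hp : 1 < p) (hg : ContDiff ℝ 2 g)
    (hΔ : ∀ x, 0 < g x → c * g x ^ p ≤ Δ g x) (x : E) : g x ≤ 0 := by
  by_contra! hgx
  have hp' : 0 < p - 1 := sub_pos.2 hp
  let k := 2 / (p - 1)
  have hkp : k * (p - 1) = 2 := div_mul_cancel₀ 2 hp'.ne'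
  have hestimate : ∀ᶠ R in atTop,
      c * g x ^ (p - 1) ≤ 2 * k * (2 * (k + 1) + Module.finrank ℝ E) / R ^ 2 := by
    filter_upwards [eventually_gt_atTop 0] with R hR
    exact mul_rpow_le_div_sq_of_rpow_le_laplacian hc (by positivity) hkp hR
      hg.continuous.continuousOn hg.contDiffOn hgx fun y _ => hΔ y
  have hlim : Tendsto (fun R : ℝ => 2 * k * (2 * (k + 1) + Module.finrank ℝ E) / R ^ 2) atTop
      (𝓝 0) := tendsto_const_nhds.div_atTop (tendsto_pow_atTop two_ne_zero)
  exact (mul_pos hc (Real.rpow_pos_of_pos hgx _)).not_ge (ge_of_tendsto hlim hestimate)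

end KellerOsserman

section AllenCahn

variable {E : Type*} [NormedAddCommGroup E] [InnerProductSpace ℝ E] [FiniteDimensional ℝ E]
  {f q : E → ℝ}

theorem le_one_of_cube_sub_le_laplacian (hf : ContDiff ℝ 2 f)
    (hΔ : ∀ x, 1 < f x → f x ^ 3 - f x ≤ Δ f x) (x : E) : f x ≤ 1 := by
  let g : E → ℝ := f - fun _ => 1
  have hshift (y : E) : Δ g y = Δ f y := by
    simp [g, hf.contDiffAt.laplacian_sub contDiffAt_const]
  have hcube (y : E) (hy : 0 < f y - 1) : 1 * (f y - 1) ^ (3 : ℝ) ≤ Δ g y := by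
    rw [one_mul, Real.rpow_ofNat, hshift]
    have : 0 < (f y - 1) * f y := mul_pos hy (by linarith)
    nlinarith [hΔ y (by linarith)]
  exact sub_nonpos.1 <|
    nonpos_of_rpow_le_laplacian one_pos (by norm_num) (hf.sub contDiff_const) hcube x

theorem abs_le_one_of_laplacian_eq (hf : ContDiff ℝ 2 f) (hq : ∀ x, 0 ≤ q x)
    (heq : ∀ x, Δ f x = f x ^ 3 - f x + q x * f x) (x : E) : |f x| ≤ 1 := by
  have hneg : -f x ≤ 1 := by
    refine le_one_of_cube_sub_le_laplacian (f := -f) hf.neg (fun y hy => ?_) x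
    simp only [laplacian_neg, Pi.neg_apply, heq] at hy ⊢
    nlinarith [hq y]
  have hpos : f x ≤ 1 :=
    le_one_of_cube_sub_le_laplacian hf (fun y hy => by nlinarith [hq y, heq y]) x
  exact abs_le.2 ⟨by linarith, hpos⟩

end AllenCahn

theorem lap_eq_laplacian {N : ℕ} {f : EuclideanSpace ℝ (Fin N) → ℝ}
    {x : EuclideanSpace ℝ (Fin N)} (hf : ContDiffAt ℝ 2 f x) : lap N f x = Δ f x := by
  rw [laplacian_eq_sum_fderiv_fderiv (EuclideanSpace.basisFun (Fin N) ℝ)]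
  refine Finset.sum_congr rfl fun i _ => ?_
  simp [fderiv_clm_apply (hasFDerivAt_fderiv hf).differentiableAt (differentiableAt_const _)]

/-- Theorem 1.3 (i): universal bound `|u| ≤ 1`, `|v| ≤ 1` for `Λ > 0`. -/
theorem stmt_2 (N : ℕ) (Λ : ℝ) (hΛ : 0 < Λ)
    (u v : EuclideanSpace ℝ (Fin (N + 1)) → ℝ)
    (hsol : IsSolution (N + 1) Λ u v) :
    ∀ x, |u x| ≤ 1 ∧ |v x| ≤ 1 := by
  obtain ⟨hu, hv, hΔu, hΔv⟩ := hsol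
  have hu_eq (x) : Δ u x = u x ^ 3 - u x + Λ * v x ^ 2 * u x := by
    rw [← lap_eq_laplacian hu.contDiffAt]
    linarith [hΔu x]
  have hv_eq (x) : Δ v x = v x ^ 3 - v x + Λ * u x ^ 2 * v x := by
    rw [← lap_eq_laplacian hv.contDiffAt]
    linarith [hΔv x]
  exact fun x => ⟨abs_le_one_of_laplacian_eq hu (fun _ => by positivity) hu_eq x,
    abs_le_one_of_laplacian_eq hv (fun _ => by positivity) hv_eq x⟩
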